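/- Fix k ≥ 1. For every Cayley tree T labelled with [n]_0, every vertex of T (including the root) has at most k children if and only if every value appears at most k times in its preference sequence π_T; hence the map T ↦ π_T restricts to a bijection between k-ary Cayley trees labelled with [n]_0 and parking functions of length n in which every symbol has multiplicity at most k. Similarly, every vertex of T is either a leaf or has exactly two children (T is a Catalan tree) if and only if every value of {1,…,n+1} appears either 0 or 2 times in π_T, giving a bijection between Catalan trees labelled with [n]_0 and parking functions of length n in which every symbol appears with multiplicity 0 or 2. -/

import Mathlib

/-!
The preference sequence of a tree and its weary permutation `W` are linked by a queue description:
`W j` is the smallest label `v` not among `W 1, …, W (j - 1)` whose preference `π v` is at most `j`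
(`IsQueue`). Indeed `π v ≤ j` says exactly that the parent of `v` is among the first `j` visited
vertices `W 0, …, W (j - 1)`. This holds for the pair `(pref n f, weary n f)` when `f` is a Cayley
tree (`isQueue_weary`), and also for the pair `(π, birdsEye n π)` when `π` is a parking function
(`isQueue_birdsEye`).

In any such queue, car `W j` parks at spot `j` (`IsQueue.spot_eq`). Hence `pref n f` is a parking
function, and `W` is determined by `π` (`IsQueue.unique`), so the tree is recovered from `π` through
`f v = W (π v - 1)`; this gives injectivity. Conversely, for a parking function `π`, the map
`ptParent n π` is a Cayley tree whose weary permutation is `birdsEye n π`, and its preference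
sequence is `π`. Together these show that `T ↦ π_T` is a bijection from Cayley trees to parking
functions (`bijOn_pref`).

Since `f c = W (x - 1) ↔ π c = x`, the multiplicity of `x` in `π` is the number of children of
`W (x - 1)` (`multIn_pref`), which gives both degree characterizations and the restricted
bijections.
-/

open scoped Classical

namespace WearyParking

/-- `f` is the parent function of a Cayley tree on `{0,…,n}` rooted at `0`:
`f 0 = 0`, `f` is pinned to `0` outside `{1,…,n}`, `f` maps `{1,…,n}` into `{0,…,n}`,
and every vertex reaches the root under iteration. -/
def IsCayleyTree (n : ℕ) (f : ℕ → ℕ) : Prop :=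
  f 0 = 0 ∧ (∀ i, n < i → f i = 0) ∧
  (∀ i, 1 ≤ i → i ≤ n → f i ≤ n) ∧
  (∀ i, 1 ≤ i → i ≤ n → ∃ k, f^[k] i = 0)

/-- A non-root vertex `i` is a record of the tree if it is greater than
all of its ancestors. -/
def IsRecord (n : ℕ) (f : ℕ → ℕ) (i : ℕ) : Prop :=
  1 ≤ i ∧ i ≤ n ∧ ∀ k, 1 ≤ k → f^[k] i < i

/-- The smallest record larger than `i`. -/
noncomputable def nextRecord (n : ℕ) (f : ℕ → ℕ) (i : ℕ) : ℕ :=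
  sInf {j | IsRecord n f j ∧ i < j}

/-- The record (blob) code of the tree, a function on `{1,…,n-1}`:
at a non-record position it records the parent, and at a record position it
records the parent of the next record. -/
noncomputable def blob (n : ℕ) (f : ℕ → ℕ) (i : ℕ) : ℕ :=
  if IsRecord n f i then f (nextRecord n f i) else f i

/-- Number of children of vertex `v` in the tree. -/
def numChildren (n : ℕ) (f : ℕ → ℕ) (v : ℕ) : ℕ :=
  ((Finset.Icc 1 n).filter fun i => f i = v).card

/-- The list of the first `i+1` vertices visited by the priority-first search:
start at the root `0`; at each step visit the smallest unvisited vertex whose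
parent has been visited. -/
noncomputable def wearyList (n : ℕ) (f : ℕ → ℕ) : ℕ → List ℕ
  | 0 => [0]
  | (i + 1) =>
      wearyList n f i ++
        [sInf {v | 1 ≤ v ∧ v ≤ n ∧ v ∉ wearyList n f i ∧ f v ∈ wearyList n f i}]

/-- The weary permutation of the tree: `weary n f i` is the `i`-th vertex visited
by the priority-first search (with `weary n f 0 = 0`). -/
noncomputable def weary (n : ℕ) (f : ℕ → ℕ) (i : ℕ) : ℕ :=
  (wearyList n f n).getD i 0

/-- The inverse of the weary permutation. -/
noncomputable def wearyInv (n : ℕ) (f : ℕ → ℕ) (v : ℕ) : ℕ :=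
  sInf {i | weary n f i = v}

/-- The preference sequence `π_T` of the tree: `π_T i = ω_T⁻¹ (f_T i) + 1`. -/
noncomputable def pref (n : ℕ) (f : ℕ → ℕ) (i : ℕ) : ℕ :=
  wearyInv n f (f i) + 1

/-- Parent function of the priority tree `pt(T)`: `ω_T⁻¹ ∘ f_T ∘ ω_T`. -/
noncomputable def prioParent (n : ℕ) (f : ℕ → ℕ) (i : ℕ) : ℕ :=
  wearyInv n f (f (weary n f i))

/-- The list of spots occupied by cars `1,…,c` in the classical parking process:
car `c` parks at the first spot `≥ π c` not occupied by an earlier car. -/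
noncomputable def spotList (π : ℕ → ℕ) : ℕ → List ℕ
  | 0 => []
  | (c + 1) => spotList π c ++ [sInf {s | π (c + 1) ≤ s ∧ s ∉ spotList π c}]

/-- The spot where car `c` ends up in the classical parking process. -/
noncomputable def spot (π : ℕ → ℕ) (c : ℕ) : ℕ :=
  (spotList π c).getD (c - 1) 0

/-- `π` is a parking function of length `n`: preferences lie in `{1,…,n}`
(pinned to `1` outside `{1,…,n}`) and every car parks within the `n` spots. -/
def IsParkingFun (n : ℕ) (π : ℕ → ℕ) : Prop :=
  (∀ c, 1 ≤ c → c ≤ n → 1 ≤ π c ∧ π c ≤ n) ∧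
  (∀ c, c = 0 ∨ n < c → π c = 1) ∧
  (∀ c, 1 ≤ c → c ≤ n → spot π c ≤ n)

/-- The bird's-eye permutation `ω_π`: the car parked at spot `i` (and `0` at `0`). -/
noncomputable def birdsEye (n : ℕ) (π : ℕ → ℕ) (i : ℕ) : ℕ :=
  if i = 0 then 0 else sInf {c | 1 ≤ c ∧ c ≤ n ∧ spot π c = i}

/-- The inverse of the bird's-eye permutation. -/
noncomputable def birdsEyeInv (n : ℕ) (π : ℕ → ℕ) (c : ℕ) : ℕ :=
  sInf {i | birdsEye n π i = c}

/-- Parent function of the parking tree `PT(π)`: `f_π i = ω_π (π i - 1)`. -/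
noncomputable def ptParent (n : ℕ) (π : ℕ → ℕ) (i : ℕ) : ℕ :=
  if 1 ≤ i ∧ i ≤ n then birdsEye n π (π i - 1) else 0

/-- `v` is a record of the parking function `π`, i.e. a left-to-right maximum of
the word `ω_π(1) ω_π(2) ⋯ ω_π(n)`. -/
def IsPfRecord (n : ℕ) (π : ℕ → ℕ) (v : ℕ) : Prop :=
  ∃ i, 1 ≤ i ∧ i ≤ n ∧ birdsEye n π i = v ∧ ∀ j, 1 ≤ j → j < i → birdsEye n π j < v

/-- The waiting time of the tree: `wait T = Σ_{i=1}^n (i - f_{pt(T)}(i))`. -/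
noncomputable def wait (n : ℕ) (f : ℕ → ℕ) : ℕ :=
  ∑ i ∈ Finset.Icc 1 n, (i - prioParent n f i)

/-- The number of priority small ascents of the tree. -/
noncomputable def psa (n : ℕ) (f : ℕ → ℕ) : ℕ :=
  ((Finset.Icc 1 n).filter fun i => prioParent n f i = i - 1).card

/-- The number of children of the root. -/
def degRoot (n : ℕ) (f : ℕ → ℕ) : ℕ := numChildren n f 0

/-- The children sequence: `chseq n f j` is the number of vertices with exactly
`j` children. -/
def chseq (n : ℕ) (f : ℕ → ℕ) (j : ℕ) : ℕ :=
  ((Finset.Icc 0 n).filter fun v => numChildren n f v = j).card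

/-- The number of probes of the parking function: `n` plus the total displacement. -/
noncomputable def probes (n : ℕ) (π : ℕ → ℕ) : ℕ :=
  n + ∑ c ∈ Finset.Icc 1 n, (spot π c - π c)

/-- The number of lucky cars of `π`: cars parking at their preferred spot. -/
noncomputable def lucky (n : ℕ) (π : ℕ → ℕ) : ℕ :=
  ((Finset.Icc 1 n).filter fun c => spot π c = π c).card

/-- The number of `1`s in `π`. -/
def ones (n : ℕ) (π : ℕ → ℕ) : ℕ :=
  ((Finset.Icc 1 n).filter fun c => π c = 1).card

/-- The multiplicity of the value `v` in the parking function `π`. -/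
def multIn (n : ℕ) (π : ℕ → ℕ) (v : ℕ) : ℕ :=
  ((Finset.Icc 1 n).filter fun c => π c = v).card

/-- The multiplicity sequence: `multSeq n π j` is the number of values in
`{1,…,n+1}` appearing exactly `j` times in `π`. -/
def multSeq (n : ℕ) (π : ℕ → ℕ) (j : ℕ) : ℕ :=
  ((Finset.Icc 1 (n + 1)).filter fun v => multIn n π v = j).card

/-- The tree is a path graph with endpoints `0` and `n`: every vertex has at most
one child and `n` is the (unique) leaf. -/
def IsPathTree (n : ℕ) (f : ℕ → ℕ) : Prop :=
  (∀ v, v ≤ n → numChildren n f v ≤ 1) ∧ numChildren n f n = 0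

/-- `g` is the parent map of a rooted forest on `{1,…,n}` rooted at `{1,…,k}`:
the vertices `1,…,k` are roots (fixed points), every other vertex of `{1,…,n}` has a
parent in `{1,…,n}`, every vertex reaches one of the roots under iteration, and `g`
is pinned to `0` outside `{1,…,n}`. -/
def IsForestRootedAt (n k : ℕ) (g : ℕ → ℕ) : Prop :=
  (∀ i, 1 ≤ i → i ≤ k → g i = i) ∧
  (∀ i, k < i → i ≤ n → 1 ≤ g i ∧ g i ≤ n) ∧
  (∀ i, 1 ≤ i → i ≤ n → ∃ m, 1 ≤ g^[m] i ∧ g^[m] i ≤ k) ∧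
  (∀ i, i = 0 ∨ n < i → g i = 0)

/-! ### The parking process -/

lemma spotList_eq_map (π : ℕ → ℕ) (c : ℕ) :
    spotList π c = (List.range c).map fun i => spot π (i + 1) := by
  induction c with
  | zero => simp [spotList]
  | succ c ih =>
    have hlen : (spotList π c).length = c := by rw [ih]; simp
    have hs : spot π (c + 1) = sInf {s | π (c + 1) ≤ s ∧ s ∉ spotList π c} := by
      simp [spot, spotList, hlen]
    rw [List.range_succ, List.map_append, ← ih, spotList]
    simp [hs]

lemma mem_spotList (π : ℕ → ℕ) (c s : ℕ) :
    s ∈ spotList π c ↔ ∃ d, 1 ≤ d ∧ d ≤ c ∧ spot π d = s := by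
  rw [spotList_eq_map]
  simp only [List.mem_map, List.mem_range]
  constructor
  · rintro ⟨i, hi, rfl⟩
    exact ⟨i + 1, by omega, by omega, rfl⟩
  · rintro ⟨d, h1, h2, rfl⟩
    exact ⟨d - 1, by omega, by rw [Nat.sub_add_cancel h1]⟩

/-- Car `c` parks at the first spot from `π c` on that no earlier car occupies. -/
lemma isLeast_spot (π : ℕ → ℕ) {c : ℕ} (hc : 1 ≤ c) :
    IsLeast {s | π c ≤ s ∧ ∀ d, 1 ≤ d → d < c → spot π d ≠ s} (spot π c) := by
  obtain ⟨c, rfl⟩ : ∃ b, c = b + 1 := ⟨c - 1, by omega⟩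
  have hlen : (spotList π c).length = c := by rw [spotList_eq_map]; simp
  have hs : spot π (c + 1) = sInf {s | π (c + 1) ≤ s ∧ s ∉ spotList π c} := by
    simp [spot, spotList, hlen]
  have hset : {s | π (c + 1) ≤ s ∧ ∀ d, 1 ≤ d → d < c + 1 → spot π d ≠ s}
      = {s | π (c + 1) ≤ s ∧ s ∉ spotList π c} := by
    ext s
    simp only [Set.mem_ofPred_eq, mem_spotList]
    grind
  rw [hset, hs]
  have hne : {s | π (c + 1) ≤ s ∧ s ∉ spotList π c}.Nonempty := by
    obtain ⟨s, hs⟩ := Infinite.exists_notMem_finset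
      ((spotList π c).toFinset ∪ Finset.range (π (c + 1)))
    simp only [Finset.mem_union, List.mem_toFinset, Finset.mem_range, not_or, not_lt] at hs
    exact ⟨s, hs.2, hs.1⟩
  exact ⟨Nat.sInf_mem hne, fun s hs => Nat.sInf_le hs⟩

lemma spot_injective (π : ℕ → ℕ) {c d : ℕ} (hc : 1 ≤ c) (hd : 1 ≤ d)
    (h : spot π c = spot π d) : c = d := by
  rcases lt_trichotomy c d with hlt | heq | hlt
  · exact absurd h ((isLeast_spot π hd).1.2 c hc hlt)
  · exact heq
  · exact absurd h.symm ((isLeast_spot π hc).1.2 d hd hlt)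

lemma le_spot (π : ℕ → ℕ) {c : ℕ} (hc : 1 ≤ c) : π c ≤ spot π c := (isLeast_spot π hc).1.1

/-! ### Queues -/

/-- `W` serves the labels `1, …, n` one at a time from a priority queue with arrival times `π`:
at time `j` it serves the smallest label `v` that has arrived (`π v ≤ j`) and has not been served
before. The extra value `W 0 = 0` is the root. -/
structure IsQueue (n : ℕ) (π W : ℕ → ℕ) : Prop where
  zero : W 0 = 0
  bij : Set.BijOn W (Set.Icc 1 n) (Set.Icc 1 n)
  pref_le : ∀ j, 1 ≤ j → j ≤ n → π (W j) ≤ j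
  min : ∀ j, 1 ≤ j → j ≤ n → ∀ v, 1 ≤ v → v ≤ n → π v ≤ j →
    (∀ i, 1 ≤ i → i < j → W i ≠ v) → W j ≤ v

namespace IsQueue

variable {n : ℕ} {π W : ℕ → ℕ}

lemma mem (h : IsQueue n π W) {j : ℕ} (h1 : 1 ≤ j) (h2 : j ≤ n) : 1 ≤ W j ∧ W j ≤ n :=
  h.bij.mapsTo ⟨h1, h2⟩

lemma le (h : IsQueue n π W) {j : ℕ} (h2 : j ≤ n) : W j ≤ n := by
  rcases Nat.eq_zero_or_pos j with rfl | h1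
  · simp [h.zero]
  · exact (h.mem h1 h2).2

lemma inj (h : IsQueue n π W) {i j : ℕ} (hi : i ≤ n) (hj : j ≤ n) (e : W i = W j) : i = j := by
  rcases Nat.eq_zero_or_pos i with rfl | h1 <;> rcases Nat.eq_zero_or_pos j with rfl | h2
  · rfl
  · have := h.mem h2 hj; have := h.zero; omega
  · have := h.mem h1 hi; have := h.zero; omega
  · exact h.bij.injOn ⟨h1, hi⟩ ⟨h2, hj⟩ e

lemma surj (h : IsQueue n π W) {v : ℕ} (h1 : 1 ≤ v) (h2 : v ≤ n) :
    ∃ j, 1 ≤ j ∧ j ≤ n ∧ W j = v := by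
  obtain ⟨j, hj, e⟩ := h.bij.surjOn (show v ∈ Set.Icc 1 n from ⟨h1, h2⟩)
  exact ⟨j, hj.1, hj.2, e⟩

lemma surj_zero (h : IsQueue n π W) {v : ℕ} (h2 : v ≤ n) : ∃ j, j ≤ n ∧ W j = v := by
  rcases Nat.eq_zero_or_pos v with rfl | h1
  · exact ⟨0, by omega, h.zero⟩
  · obtain ⟨j, _, hj, e⟩ := h.surj h1 h2
    exact ⟨j, hj, e⟩

/-- The label served at time `j` is the car parked at spot `j`. By induction on the label: a spot
between the preference of the car and `j` was assigned by the queue to a smaller label, and hence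
is already occupied. -/
lemma spot_eq (h : IsQueue n π W) (hπ : ∀ c, 1 ≤ c → c ≤ n → 1 ≤ π c) :
    ∀ c j, 1 ≤ j → j ≤ n → W j = c → spot π c = j := by
  intro c
  induction c using Nat.strong_induction_on with
  | _ c ih =>
    intro j h1 h2 e
    subst e
    obtain ⟨hm1, hm2⟩ := h.mem h1 h2
    have hl := isLeast_spot π hm1
    refine hl.unique ⟨⟨h.pref_le j h1 h2, ?_⟩, ?_⟩
    · intro d hd1 hd2 hd
      obtain ⟨i, hi1, hi2, rfl⟩ := h.surj hd1 (by omega)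
      have := ih _ hd2 i hi1 hi2 rfl
      have : i = j := by omega
      subst this
      omega
    · rintro s ⟨hs1, hs2⟩
      by_contra hlt
      have hs0 : 1 ≤ s := (hπ _ hm1 hm2).trans hs1
      have hle : W s ≤ W j := h.min s hs0 (by omega) _ hm1 hm2 hs1 fun i hi1 hi2 hi => by
        have := h.inj (by omega) h2 hi
        omega
      have hne : W s ≠ W j := fun he => by
        have := h.inj (by omega) h2 he
        omega
      have hlt' : W s < W j := lt_of_le_of_ne hle hne
      exact hs2 (W s) (h.mem hs0 (by omega)).1 hlt' (ih _ hlt' s hs0 (by omega) rfl)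

lemma unique (h : IsQueue n π W) {W' : ℕ → ℕ} (h' : IsQueue n π W')
    (hπ : ∀ c, 1 ≤ c → c ≤ n → 1 ≤ π c) {j : ℕ} (hj : j ≤ n) : W j = W' j := by
  rcases Nat.eq_zero_or_pos j with rfl | h1
  · rw [h.zero, h'.zero]
  · apply spot_injective π (h.mem h1 hj).1 (h'.mem h1 hj).1
    rw [h.spot_eq hπ _ j h1 hj rfl, h'.spot_eq hπ _ j h1 hj rfl]

end IsQueue

/-! ### The bird's-eye permutation of a parking function -/

lemma exists_spot_eq {n : ℕ} {π : ℕ → ℕ} (h : IsParkingFun n π) {j : ℕ} (h1 : 1 ≤ j)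
    (h2 : j ≤ n) : ∃ c, 1 ≤ c ∧ c ≤ n ∧ spot π c = j := by
  have hmaps : ∀ c ∈ Finset.Icc 1 n, spot π c ∈ Finset.Icc 1 n := by
    intro c hc
    rw [Finset.mem_Icc] at hc ⊢
    exact ⟨(h.1 c hc.1 hc.2).1.trans (le_spot π hc.1), h.2.2 c hc.1 hc.2⟩
  have hinj : Set.InjOn (spot π) (Finset.Icc 1 n : Finset ℕ) := by
    intro c hc d hd e
    simp only [Finset.coe_Icc, Set.mem_Icc] at hc hd
    exact spot_injective π hc.1 hd.1 e
  have hsurj := Finset.surjOn_of_injOn_of_card_le (spot π) hmaps hinj le_rfl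
  obtain ⟨c, hc, e⟩ := hsurj (show j ∈ ((Finset.Icc 1 n : Finset ℕ) : Set ℕ) by simp [h1, h2])
  simp only [Finset.coe_Icc, Set.mem_Icc] at hc
  exact ⟨c, hc.1, hc.2, e⟩

lemma birdsEye_spec {n : ℕ} {π : ℕ → ℕ} (h : IsParkingFun n π) {j : ℕ} (h1 : 1 ≤ j)
    (h2 : j ≤ n) : 1 ≤ birdsEye n π j ∧ birdsEye n π j ≤ n ∧ spot π (birdsEye n π j) = j := by
  rw [birdsEye, if_neg (by omega)]
  exact Nat.sInf_mem (s := {c | 1 ≤ c ∧ c ≤ n ∧ spot π c = j}) (exists_spot_eq h h1 h2)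

/-- If a smaller label than the car parked at spot `j` had arrived and were not yet parked below
`j`, it would have found spot `j` free and parked there or earlier. -/
lemma isQueue_birdsEye {n : ℕ} {π : ℕ → ℕ} (h : IsParkingFun n π) :
    IsQueue n π (birdsEye n π) where
  zero := by simp [birdsEye]
  bij := by
    refine ⟨fun j hj => ?_, fun i hi j hj e => ?_, fun v hv => ?_⟩
    · have := birdsEye_spec h hj.1 hj.2
      exact ⟨this.1, this.2.1⟩
    · rw [← (birdsEye_spec h hi.1 hi.2).2.2, e, (birdsEye_spec h hj.1 hj.2).2.2]
    · have hs1 := (h.1 v hv.1 hv.2).1.trans (le_spot π hv.1)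
      have hs2 := h.2.2 v hv.1 hv.2
      have := birdsEye_spec h hs1 hs2
      exact ⟨spot π v, ⟨hs1, hs2⟩, spot_injective π this.1 hv.1 this.2.2⟩
  pref_le := fun j h1 h2 => by
    have := birdsEye_spec h h1 h2
    exact (le_spot π this.1).trans this.2.2.le
  min := fun j h1 h2 v hv1 hv2 hv hi => by
    by_contra! hlt
    have hj := birdsEye_spec h h1 h2
    have hle : spot π v ≤ j := (isLeast_spot π hv1).2 ⟨hv, fun d hd1 hd2 hd => by
      have := spot_injective π hd1 hj.1 (hd.trans hj.2.2.symm)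
      omega⟩
    have hs1 := (h.1 v hv1 hv2).1.trans (le_spot π hv1)
    have hsv := birdsEye_spec h hs1 (hle.trans h2)
    have he : birdsEye n π (spot π v) = v := spot_injective π hsv.1 hv1 hsv.2.2
    rcases hle.lt_or_eq with hl | hl
    · exact hi _ hs1 hl he
    · rw [hl] at he
      omega

/-! ### The weary permutation of a tree -/

/-- Each step of the search only appends to the list, so entry `j` of a later list is the last entry
of the list after step `j`. -/
lemma wearyList_eq_map_aux (n : ℕ) (f : ℕ → ℕ) (i : ℕ) :
    wearyList n f i = (List.range (i + 1)).map fun j => (wearyList n f j).getD j 0 := by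
  induction i with
  | zero => simp [wearyList]
  | succ i ih =>
    have hlen : (wearyList n f i).length = i + 1 := by rw [ih]; simp
    rw [List.range_succ, List.map_append, ← ih]
    conv_lhs => rw [wearyList]
    simp [wearyList, hlen]

lemma weary_eq_getD {n : ℕ} (f : ℕ → ℕ) {i : ℕ} (hi : i ≤ n) :
    weary n f i = (wearyList n f i).getD i 0 := by
  rw [weary, wearyList_eq_map_aux n f n, List.getD_eq_getElem _ _ (by simp; omega)]
  simp

lemma mem_wearyList {n : ℕ} (f : ℕ → ℕ) {i : ℕ} (hi : i ≤ n) (v : ℕ) :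
    v ∈ wearyList n f i ↔ ∃ j, j ≤ i ∧ weary n f j = v := by
  rw [wearyList_eq_map_aux]
  simp only [List.mem_map, List.mem_range]
  constructor
  · rintro ⟨j, hj, rfl⟩
    exact ⟨j, by omega, weary_eq_getD f (by omega)⟩
  · rintro ⟨j, hj, rfl⟩
    exact ⟨j, by omega, (weary_eq_getD f (by omega)).symm⟩

lemma weary_zero (n : ℕ) (f : ℕ → ℕ) : weary n f 0 = 0 := by
  rw [weary_eq_getD f (Nat.zero_le n)]
  simp [wearyList]

/-- The vertices that may be visited at step `j`: unvisited, with visited parent. -/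
def frontier (n : ℕ) (f : ℕ → ℕ) (j : ℕ) : Set ℕ :=
  {v | 1 ≤ v ∧ v ≤ n ∧ (∀ i, i < j → weary n f i ≠ v) ∧ ∃ i, i < j ∧ weary n f i = f v}

lemma weary_eq_sInf {n : ℕ} (f : ℕ → ℕ) {j : ℕ} (h1 : 1 ≤ j) (h2 : j ≤ n) :
    weary n f j = sInf (frontier n f j) := by
  obtain ⟨i, rfl⟩ : ∃ i, j = i + 1 := ⟨j - 1, by omega⟩
  have hlen : (wearyList n f i).length = i + 1 := by rw [wearyList_eq_map_aux]; simp
  rw [weary_eq_getD f h2, wearyList, List.getD_append_right _ _ _ _ (by omega)]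
  simp only [hlen, Nat.sub_self, List.getD_cons_zero]
  congr 1
  ext v
  simp only [frontier, Set.mem_ofPred_eq, mem_wearyList f (by omega : i ≤ n)]
  grind

lemma IsCayleyTree.le {n : ℕ} {f : ℕ → ℕ} (hf : IsCayleyTree n f) (i : ℕ) : f i ≤ n := by
  by_cases h1 : 1 ≤ i
  · by_cases h2 : i ≤ n
    · exact hf.2.2.1 i h1 h2
    · simp [hf.2.1 i (by omega)]
  · simp [show i = 0 by omega, hf.1]

/-- Some vertex `u` is unvisited, and the first visited vertex on its path to the root has an
unvisited child on that path. -/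
lemma frontier_nonempty {n : ℕ} {f : ℕ → ℕ} (hf : IsCayleyTree n f) {j : ℕ} (h1 : 1 ≤ j)
    (h2 : j ≤ n) : (frontier n f j).Nonempty := by
  obtain ⟨u, hu, hu'⟩ : ∃ u ∈ Finset.range (n + 1),
      u ∉ (Finset.range j).image (weary n f) := by
    apply Finset.exists_mem_notMem_of_card_lt_card
    exact Finset.card_image_le.trans_lt (by simp; omega)
  simp only [Finset.mem_range, Finset.mem_image, not_exists, not_and] at hu hu'
  have hu0 : 1 ≤ u := by
    rcases Nat.eq_zero_or_pos u with rfl | h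
    · exact absurd (weary_zero n f) (hu' 0 (by omega))
    · exact h
  have hex : ∃ k, ∃ i, i < j ∧ weary n f i = f^[k] u := by
    obtain ⟨k, hk⟩ := hf.2.2.2 u hu0 (by omega)
    exact ⟨k, 0, by omega, by rw [weary_zero, hk]⟩
  obtain ⟨k, hk⟩ : ∃ k, Nat.find hex = k + 1 := by
    apply Nat.exists_eq_succ_of_ne_zero
    intro h0
    obtain ⟨i, hi, e⟩ := (Nat.find_eq_zero hex).1 h0
    exact hu' i hi e
  have hvis := Nat.find_spec hex
  rw [hk, Function.iterate_succ_apply'] at hvis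
  have hun : ∀ i, i < j → weary n f i ≠ f^[k] u := fun i hi e =>
    Nat.find_min hex (show k < Nat.find hex by omega) ⟨i, hi, e⟩
  refine ⟨f^[k] u, ?_, ?_, hun, hvis⟩
  · rw [Nat.one_le_iff_ne_zero]
    intro h0
    exact hun 0 (by omega) (by rw [weary_zero, h0])
  · cases k with
    | zero => simpa using (by omega : u ≤ n)
    | succ k => rw [Function.iterate_succ_apply']; exact hf.le _

lemma isLeast_weary {n : ℕ} {f : ℕ → ℕ} (hf : IsCayleyTree n f) {j : ℕ} (h1 : 1 ≤ j)
    (h2 : j ≤ n) : IsLeast (frontier n f j) (weary n f j) := by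
  rw [weary_eq_sInf f h1 h2]
  exact ⟨Nat.sInf_mem (frontier_nonempty hf h1 h2), fun v hv => Nat.sInf_le hv⟩

lemma weary_bijOn {n : ℕ} {f : ℕ → ℕ} (hf : IsCayleyTree n f) :
    Set.BijOn (weary n f) (Set.Icc 1 n) (Set.Icc 1 n) := by
  have hmaps : ∀ j ∈ Finset.Icc 1 n, weary n f j ∈ Finset.Icc 1 n := by
    intro j hj
    rw [Finset.mem_Icc] at hj ⊢
    have := (isLeast_weary hf hj.1 hj.2).1
    exact ⟨this.1, this.2.1⟩
  have hinj : Set.InjOn (weary n f) (Finset.Icc 1 n : Finset ℕ) := by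
    intro i hi j hj e
    simp only [Finset.coe_Icc, Set.mem_Icc] at hi hj
    rcases lt_trichotomy i j with hlt | heq | hlt
    · exact absurd e ((isLeast_weary hf hj.1 hj.2).1.2.2.1 i hlt)
    · exact heq
    · exact absurd e.symm ((isLeast_weary hf hi.1 hi.2).1.2.2.1 j hlt)
  have hsurj := Finset.surjOn_of_injOn_of_card_le (weary n f) hmaps hinj le_rfl
  rw [← Finset.coe_Icc]
  exact ⟨hmaps, hinj, hsurj⟩

lemma wearyInv_zero (n : ℕ) (f : ℕ → ℕ) : wearyInv n f 0 = 0 :=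
  Nat.sInf_eq_zero.2 (Or.inl (weary_zero n f))

lemma exists_weary_eq {n : ℕ} {f : ℕ → ℕ} (hf : IsCayleyTree n f) {v : ℕ} (hv : v ≤ n) :
    ∃ j, j ≤ n ∧ weary n f j = v := by
  rcases Nat.eq_zero_or_pos v with rfl | h
  · exact ⟨0, by omega, weary_zero n f⟩
  · obtain ⟨j, hj, e⟩ := (weary_bijOn hf).surjOn (show v ∈ Set.Icc 1 n from ⟨h, hv⟩)
    exact ⟨j, hj.2, e⟩

lemma weary_wearyInv {n : ℕ} {f : ℕ → ℕ} (hf : IsCayleyTree n f) {v : ℕ} (hv : v ≤ n) :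
    wearyInv n f v ≤ n ∧ weary n f (wearyInv n f v) = v := by
  obtain ⟨j, hj, e⟩ := exists_weary_eq hf hv
  exact ⟨(Nat.sInf_le (s := {i | weary n f i = v}) e).trans hj,
    Nat.sInf_mem (s := {i | weary n f i = v}) ⟨j, e⟩⟩

lemma isQueue_weary {n : ℕ} {f : ℕ → ℕ} (hf : IsCayleyTree n f) :
    IsQueue n (pref n f) (weary n f) where
  zero := weary_zero n f
  bij := weary_bijOn hf
  pref_le := fun j h1 h2 => by
    obtain ⟨i, hi, e⟩ := (isLeast_weary hf h1 h2).1.2.2.2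
    have : wearyInv n f (f (weary n f j)) ≤ i :=
      Nat.sInf_le (s := {i | weary n f i = f (weary n f j)}) e
    rw [pref]
    omega
  min := fun j h1 h2 v hv1 hv2 hv hi => by
    refine (isLeast_weary hf h1 h2).2 ⟨hv1, hv2, fun i hij e => ?_, wearyInv n f (f v), ?_, ?_⟩
    · rcases Nat.eq_zero_or_pos i with rfl | h0
      · rw [weary_zero] at e
        omega
      · exact hi i h0 hij e
    · rw [pref] at hv
      omega
    · exact (weary_wearyInv hf (hf.le v)).2

lemma parent_eq {n : ℕ} {f : ℕ → ℕ} (hf : IsCayleyTree n f) (v : ℕ) :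
    f v = weary n f (pref n f v - 1) := by
  rw [pref, Nat.add_sub_cancel, (weary_wearyInv hf (hf.le v)).2]

lemma pref_mem {n : ℕ} {f : ℕ → ℕ} (hf : IsCayleyTree n f) {v : ℕ} (h1 : 1 ≤ v) (h2 : v ≤ n) :
    1 ≤ pref n f v ∧ pref n f v ≤ n := by
  refine ⟨by simp [pref], ?_⟩
  obtain ⟨j, hj1, hj2, rfl⟩ := (isQueue_weary hf).surj h1 h2
  exact ((isQueue_weary hf).pref_le j hj1 hj2).trans hj2

/-! ### The bijection between trees and parking functions -/

lemma isParkingFun_pref {n : ℕ} {f : ℕ → ℕ} (hf : IsCayleyTree n f) :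
    IsParkingFun n (pref n f) := by
  refine ⟨fun c => pref_mem hf, fun c hc => ?_, fun c h1 h2 => ?_⟩
  · have : f c = 0 := by
      rcases hc with rfl | hc
      · exact hf.1
      · exact hf.2.1 c hc
    rw [pref, this, wearyInv_zero]
  · obtain ⟨j, hj1, hj2, e⟩ := (isQueue_weary hf).surj h1 h2
    rw [(isQueue_weary hf).spot_eq (fun c h1 h2 => (pref_mem hf h1 h2).1) c j hj1 hj2 e]
    exact hj2

/-- In `ptParent n π`, the parent of the car parked at spot `j` is parked at an earlier spot, so
iteration reaches the root. -/
lemma isCayleyTree_ptParent {n : ℕ} {π : ℕ → ℕ} (h : IsParkingFun n π) :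
    IsCayleyTree n (ptParent n π) := by
  have hq := isQueue_birdsEye h
  refine ⟨by simp [ptParent], fun i hi => if_neg (by omega), fun i h1 h2 => ?_, fun i h1 h2 => ?_⟩
  · rw [ptParent, if_pos ⟨h1, h2⟩]
    have := (h.1 i h1 h2).2
    exact hq.le (by omega)
  · have key : ∀ j, j ≤ n → ∃ k, (ptParent n π)^[k] (birdsEye n π j) = 0 := by
      intro j
      induction j using Nat.strong_induction_on with
      | _ j ih =>
        intro hj
        rcases Nat.eq_zero_or_pos j with rfl | hj1
        · exact ⟨0, hq.zero⟩
        · have hm := hq.mem hj1 hj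
          have hp := hq.pref_le j hj1 hj
          have hp1 := (h.1 _ hm.1 hm.2).1
          obtain ⟨k, hk⟩ := ih (π (birdsEye n π j) - 1) (by omega) (by omega)
          refine ⟨k + 1, ?_⟩
          rw [Function.iterate_succ_apply, ptParent, if_pos hm]
          exact hk
    obtain ⟨j, _, hj, rfl⟩ := hq.surj h1 h2
    exact key j hj

lemma weary_ptParent {n : ℕ} {π : ℕ → ℕ} (h : IsParkingFun n π) :
    ∀ j, j ≤ n → weary n (ptParent n π) j = birdsEye n π j := by
  have hq := isQueue_birdsEye h
  have hf := isCayleyTree_ptParent h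
  intro j
  induction j using Nat.strong_induction_on with
  | _ j ih =>
    intro hj
    rcases Nat.eq_zero_or_pos j with rfl | hj1
    · rw [weary_zero, hq.zero]
    · have hm := hq.mem hj1 hj
      refine (isLeast_weary hf hj1 hj).unique ⟨⟨hm.1, hm.2, fun i hi e => ?_, ?_⟩, ?_⟩
      · rw [ih i hi (by omega)] at e
        have := hq.inj (by omega) hj e
        omega
      · have hp := hq.pref_le j hj1 hj
        have hp1 := (h.1 _ hm.1 hm.2).1
        refine ⟨π (birdsEye n π j) - 1, by omega, ?_⟩
        rw [ih _ (by omega) (by omega), ptParent, if_pos hm]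
      · rintro v ⟨hv1, hv2, hun, i, hi, e⟩
        have hπ := h.1 v hv1 hv2
        refine hq.min j hj1 hj v hv1 hv2 ?_ fun i hi1 hi2 e => ?_
        · rw [ih i hi (by omega), ptParent, if_pos ⟨hv1, hv2⟩] at e
          have := hq.inj (by omega) (by omega) e
          omega
        · exact hun i hi2 (by rw [ih i hi2 (by omega), e])

lemma pref_ptParent {n : ℕ} {π : ℕ → ℕ} (h : IsParkingFun n π) :
    pref n (ptParent n π) = π := by
  have hq := isQueue_birdsEye h
  have hf := isCayleyTree_ptParent h
  funext v
  by_cases hv : 1 ≤ v ∧ v ≤ n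
  · have hπ := h.1 v hv.1 hv.2
    have hp := pref_mem hf hv.1 hv.2
    have e := parent_eq hf v
    rw [weary_ptParent h _ (by omega), ptParent, if_pos hv] at e
    have := hq.inj (by omega) (by omega) e
    omega
  · rw [(isParkingFun_pref hf).2.1 v (by omega), h.2.1 v (by omega)]

lemma bijOn_pref (n : ℕ) :
    Set.BijOn (fun f => pref n f) {f | IsCayleyTree n f} {π | IsParkingFun n π} := by
  refine ⟨fun f hf => isParkingFun_pref hf, fun f hf g hg e => ?_, fun π h => ?_⟩
  · change IsCayleyTree n f at hf
    change IsCayleyTree n g at hg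
    change pref n f = pref n g at e
    funext v
    by_cases hv : 1 ≤ v ∧ v ≤ n
    · have hp := pref_mem hg hv.1 hv.2
      rw [parent_eq hf v, parent_eq hg v, e]
      exact (e ▸ isQueue_weary hf).unique (isQueue_weary hg)
        (fun c h1 h2 => (pref_mem hg h1 h2).1) (by omega)
    · rcases Nat.eq_zero_or_pos v with rfl | h
      · rw [hf.1, hg.1]
      · rw [hf.2.1 v (by omega), hg.2.1 v (by omega)]
  · exact ⟨ptParent n π, isCayleyTree_ptParent h, pref_ptParent h⟩

/-! ### Multiplicities and numbers of children -/

lemma multIn_pref {n : ℕ} {f : ℕ → ℕ} (hf : IsCayleyTree n f) {x : ℕ} (h1 : 1 ≤ x)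
    (h2 : x ≤ n + 1) : multIn n (pref n f) x = numChildren n f (weary n f (x - 1)) := by
  rw [multIn, numChildren]
  congr 1
  refine Finset.filter_congr fun c hc => ?_
  rw [Finset.mem_Icc] at hc
  have hp := pref_mem hf hc.1 hc.2
  constructor
  · intro e
    rw [parent_eq hf c, e]
  · intro e
    rw [parent_eq hf c] at e
    have := (isQueue_weary hf).inj (by omega) (by omega) e
    omega

lemma multIn_pref_of_not {n : ℕ} {f : ℕ → ℕ} (hf : IsCayleyTree n f) {x : ℕ}
    (hx : ¬ (1 ≤ x ∧ x ≤ n + 1)) : multIn n (pref n f) x = 0 := by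
  rw [multIn, Finset.card_eq_zero, Finset.filter_eq_empty_iff]
  intro c hc e
  rw [Finset.mem_Icc] at hc
  have hp := pref_mem hf hc.1 hc.2
  omega

/-- A property holds of all numbers of children if and only if it holds of all multiplicities of
values in `{1, …, n + 1}`. -/
lemma forall_numChildren_iff {n : ℕ} {f : ℕ → ℕ} (hf : IsCayleyTree n f) (P : ℕ → Prop) :
    (∀ v, v ≤ n → P (numChildren n f v)) ↔
      ∀ x, 1 ≤ x → x ≤ n + 1 → P (multIn n (pref n f) x) := by
  constructor
  · intro h x h1 h2
    rw [multIn_pref hf h1 h2]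
    exact h _ ((isQueue_weary hf).le (by omega))
  · intro h v hv
    obtain ⟨j, hj, rfl⟩ := (isQueue_weary hf).surj_zero hv
    have := h (j + 1) (by omega) (by omega)
    rwa [multIn_pref hf (by omega) (by omega), Nat.add_sub_cancel] at this

lemma forall_numChildren_le_iff {n : ℕ} {f : ℕ → ℕ} (hf : IsCayleyTree n f) (k : ℕ) :
    (∀ v, v ≤ n → numChildren n f v ≤ k) ↔ ∀ x, multIn n (pref n f) x ≤ k := by
  rw [forall_numChildren_iff hf (· ≤ k)]
  refine ⟨fun h x => ?_, fun h x _ _ => h x⟩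
  by_cases hx : 1 ≤ x ∧ x ≤ n + 1
  · exact h x hx.1 hx.2
  · simp [multIn_pref_of_not hf hx]

lemma bijOn_sep {α β : Type*} {g : α → β} {P P' : α → Prop} {Q Q' : β → Prop}
    (h : Set.BijOn g {a | P a} {b | Q b}) (hiff : ∀ a, P a → (P' a ↔ Q' (g a))) :
    Set.BijOn g {a | P a ∧ P' a} {b | Q b ∧ Q' b} := by
  refine ⟨fun a ha => ⟨h.mapsTo ha.1, (hiff a ha.1).1 ha.2⟩,
    h.injOn.mono fun a ha => ha.1, fun b hb => ?_⟩
  obtain ⟨a, ha, rfl⟩ := h.surjOn hb.1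
  exact ⟨a, ⟨ha, (hiff a ha).2 hb.2⟩, rfl⟩

/-- A Cayley tree is `k`-ary iff every value has multiplicity at
most `k` in its preference sequence, giving a bijection between `k`-ary trees and
parking functions with all multiplicities `≤ k`; and a Cayley tree is a Catalan tree
(every vertex a leaf or with exactly two children) iff every value of `{1,…,n+1}`
appears `0` or `2` times in its preference sequence, giving a bijection between
Catalan trees and parking functions with all multiplicities `0` or `2`. -/
theorem stmt19 (n k : ℕ) (hk : 1 ≤ k) :
    (∀ f : ℕ → ℕ, IsCayleyTree n f →
      ((∀ v, v ≤ n → numChildren n f v ≤ k) ↔ (∀ x, multIn n (pref n f) x ≤ k))) ∧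
    Set.BijOn (fun f => pref n f)
      {f : ℕ → ℕ | IsCayleyTree n f ∧ ∀ v, v ≤ n → numChildren n f v ≤ k}
      {π : ℕ → ℕ | IsParkingFun n π ∧ ∀ x, multIn n π x ≤ k} ∧
    (∀ f : ℕ → ℕ, IsCayleyTree n f →
      ((∀ v, v ≤ n → numChildren n f v = 0 ∨ numChildren n f v = 2) ↔
        (∀ x, 1 ≤ x → x ≤ n + 1 →
          multIn n (pref n f) x = 0 ∨ multIn n (pref n f) x = 2))) ∧
    Set.BijOn (fun f => pref n f)
      {f : ℕ → ℕ | IsCayleyTree n f ∧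
        ∀ v, v ≤ n → numChildren n f v = 0 ∨ numChildren n f v = 2}
      {π : ℕ → ℕ | IsParkingFun n π ∧
        ∀ x, 1 ≤ x → x ≤ n + 1 → multIn n π x = 0 ∨ multIn n π x = 2} := by
  exact ⟨fun f hf => forall_numChildren_le_iff hf k,
    bijOn_sep (bijOn_pref n) fun f hf => forall_numChildren_le_iff hf k,
    fun f hf => forall_numChildren_iff hf fun m => m = 0 ∨ m = 2,
    bijOn_sep (bijOn_pref n) fun f hf => forall_numChildren_iff hf fun m => m = 0 ∨ m = 2⟩

end WearyParking
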